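/- Let N>1 be an integer. Then c(N) ≥ 1 if one of the following holds: (1) ω(N) ≥ 5, i.e., N has at least five distinct prime factors; or (2) ω(N) ≥ 4 and N is even. -/

import Mathlib

namespace Paper

noncomputable section

/-- Closed disk attached to a rational `α = a/b` in lowest terms:
center `α`, radius `1/b`. -/
def disk (α : ℚ) : Set ℂ := Metric.closedBall (α : ℂ) (1 / (α.den : ℝ))

/-- The closed disk `D_{a/b}` of radius `1/b` centered at `a/b`. -/
def diskAt (a b : ℕ) : Set ℂ := Metric.closedBall ((a : ℂ) / (b : ℂ)) (1 / (b : ℝ))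

/-- The north pole `P_α = a/b + i/b` of the disk of `α = a/b` in lowest terms. -/
def northPole (α : ℚ) : ℂ := (α : ℂ) + Complex.I / (α.den : ℂ)

/-- Complexity of the north pole of `α` relative to a set `S` of rationals:
the number of `β ∈ S`, `β ≠ α`, whose disk contains `P_α`. -/
def poleComplexity (S : Set ℚ) (α : ℚ) : ℕ :=
  {β ∈ S | β ≠ α ∧ northPole α ∈ disk β}.ncard

/-- Rationals `a/b ∈ [0,1]` in lowest terms with `N ∣ b`. -/
def cand (N : ℕ) : Set ℚ := {α | 0 ≤ α ∧ α ≤ 1 ∧ N ∣ α.den}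

/-- The region `R_N`. -/
def RN (N : ℕ) : Set ℂ := ⋃ α ∈ cand N, disk α

/-- The set `S_N`: those `α` whose disk is not covered by the other disks. -/
def SSet (N : ℕ) : Set ℚ :=
  {α | α ∈ cand N ∧ ¬ disk α ⊆ ⋃ β ∈ cand N \ {α}, disk β}

/-- The complexity `c(N)`: the maximum of the complexities of north poles of `α ∈ S_N`. -/
def cN (N : ℕ) : ℕ := sSup (poleComplexity (SSet N) '' SSet N)

/-- The rational `a / (k N)`. -/
def frac (N : ℕ) (a k : ℤ) : ℚ := (a : ℚ) / ((k * N : ℤ) : ℚ)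

theorem frac_num_den {N : ℕ} (hN : 0 < N) {a k : ℤ} (hk : 0 < k) (haN : IsCoprime a N)
    (hak : IsCoprime a k) : (frac N a k).num = a ∧ ((frac N a k).den : ℤ) = k * N := by
  have hkN : 0 < k * (N : ℤ) := by positivity
  have hc : Nat.Coprime a.natAbs (k * (N : ℤ)).natAbs :=
    Int.isCoprime_iff_gcd_eq_one.mp (hak.mul_right haN)
  exact ⟨Rat.num_div_eq_of_coprime hkN hc, Rat.den_div_eq_of_coprime hkN hc⟩

theorem frac_mem_cand {N : ℕ} (hN : 0 < N) {a k : ℤ} (hk : 0 < k) (haN : IsCoprime a N)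
    (hak : IsCoprime a k) (h0 : 0 ≤ a) (h1 : a ≤ k * N) : frac N a k ∈ cand N := by
  have hkN : 0 < k * (N : ℤ) := by positivity
  have hkN' : (0 : ℚ) < ((k * N : ℤ) : ℚ) := by exact_mod_cast hkN
  refine ⟨?_, ?_, ?_⟩
  · exact div_nonneg (by exact_mod_cast h0) hkN'.le
  · exact (div_le_one hkN').mpr (by exact_mod_cast h1)
  · have := (frac_num_den hN hk haN hak).2
    exact_mod_cast (Dvd.intro_left k this.symm : (N : ℤ) ∣ ((frac N a k).den : ℤ))

theorem exists_frac_of_mem_cand {N : ℕ} {γ : ℚ} (h : γ ∈ cand N) :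
    ∃ a k : ℤ, 0 < k ∧ IsCoprime a N ∧ IsCoprime a k ∧ 0 ≤ a ∧ a ≤ k * N ∧ γ = frac N a k := by
  obtain ⟨h0, h1, d, hd⟩ := h
  have hdpos : 0 < d := by
    rcases Nat.eq_zero_or_pos d with rfl | h
    · exact absurd (hd.trans (mul_zero N)) γ.den_ne_zero
    · exact h
  have hden : ((d * N : ℤ)) = γ.den := by rw [hd]; push_cast; ring
  have hc : IsCoprime γ.num ((d : ℤ) * N) := by
    rw [hden]
    exact Int.isCoprime_iff_gcd_eq_one.mpr γ.reduced
  have hγ : γ = frac N γ.num d := by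
    rw [frac, hden]
    exact (Rat.num_div_den γ).symm
  refine ⟨γ.num, d, by exact_mod_cast hdpos, hc.of_mul_right_right, hc.of_mul_right_left,
    Rat.num_nonneg.mpr h0, ?_, hγ⟩
  rw [hden]
  exact Rat.num_le_denom_iff.mpr h1

theorem mem_disk_frac {N : ℕ} (hN : 0 < N) {a k : ℤ} (hk : 0 < k) (haN : IsCoprime a N)
    (hak : IsCoprime a k) {X Y M : ℤ} (hM : 0 < M) :
    (⟨X / (M * N), Y / (M * N)⟩ : ℂ) ∈ disk (frac N a k) ↔
      (X * k - M * a) ^ 2 + (Y * k) ^ 2 ≤ M ^ 2 := by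
  have hden : ((frac N a k).den : ℝ) = k * N := by
    exact_mod_cast (frac_num_den hN hk haN hak).2
  have hN' : (0 : ℝ) < N := by exact_mod_cast hN
  have hk' : (0 : ℝ) < k := by exact_mod_cast hk
  have hM' : (0 : ℝ) < M := by exact_mod_cast hM
  have hcast : ((frac N a k : ℚ) : ℂ) = ((a / (k * N) : ℝ) : ℂ) := by
    simp [frac]
  rw [disk, hden, hcast, Metric.mem_closedBall, Complex.dist_eq_re_im,
    Real.sqrt_le_left (by positivity)]
  simp only [Complex.ofReal_re, Complex.ofReal_im, sub_zero]
  have e1 : ((X : ℝ) / (M * N) - a / (k * N)) ^ 2 + ((Y : ℝ) / (M * N)) ^ 2 =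
      ((X * k - M * a) ^ 2 + (Y * k) ^ 2) / (M * k * N) ^ 2 := by
    field_simp
  have e2 : (1 / ((k : ℝ) * N)) ^ 2 = M ^ 2 / (M * k * N) ^ 2 := by
    field_simp
  rw [e1, e2, div_le_div_iff_of_pos_right (by positivity)]
  exact_mod_cast Iff.rfl

theorem frac_mem_SSet {N : ℕ} (hN : 0 < N) {a k : ℤ} (hk : 0 < k) (haN : IsCoprime a N)
    (hak : IsCoprime a k) (h0 : 0 ≤ a) (h1 : a ≤ k * N) (X Y M : ℤ) (hM : 0 < M)
    (hin : (X * k - M * a) ^ 2 + (Y * k) ^ 2 ≤ M ^ 2)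
    (hout : ∀ a' k' : ℤ, 0 < k' → IsCoprime a' N → IsCoprime a' k' →
      (X * k' - M * a') ^ 2 + (Y * k') ^ 2 ≤ M ^ 2 → a' = a ∧ k' = k) :
    frac N a k ∈ SSet N := by
  refine ⟨frac_mem_cand hN hk haN hak h0 h1, fun hsub => ?_⟩
  have hz := hsub ((mem_disk_frac hN hk haN hak hM).mpr hin)
  simp only [Set.mem_iUnion, exists_prop] at hz
  obtain ⟨β, ⟨hβ, hne⟩, hzβ⟩ := hz
  obtain ⟨a', k', hk', ha'N, ha'k', -, -, rfl⟩ := exists_frac_of_mem_cand hβ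
  obtain ⟨rfl, rfl⟩ := hout a' k' hk' ha'N ha'k' ((mem_disk_frac hN hk' ha'N ha'k' hM).mp hzβ)
  exact hne rfl

theorem disk_frac_subset {N : ℕ} (hN : 0 < N) {a k a' k' : ℤ} (hk : 0 < k) (hk' : 0 < k')
    (haN : IsCoprime a N) (hak : IsCoprime a k) (haN' : IsCoprime a' N) (hak' : IsCoprime a' k')
    (h : |a * k' - a' * k| ≤ k - k') : disk (frac N a k) ⊆ disk (frac N a' k') := by
  have hden : ((frac N a k).den : ℝ) = k * N := by
    exact_mod_cast (frac_num_den hN hk haN hak).2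
  have hden' : ((frac N a' k').den : ℝ) = k' * N := by
    exact_mod_cast (frac_num_den hN hk' haN' hak').2
  have hN0 : (0 : ℝ) < N := by exact_mod_cast hN
  have hk0 : (0 : ℝ) < k := by exact_mod_cast hk
  have hk0' : (0 : ℝ) < k' := by exact_mod_cast hk'
  have hcast : ∀ a k : ℤ, ((frac N a k : ℚ) : ℂ) = ((a / (k * N) : ℝ) : ℂ) := by
    intro a k; simp [frac]
  have hR : |(a : ℝ) * k' - a' * k| ≤ k - k' := by exact_mod_cast h
  refine Metric.closedBall_subset_closedBall' ?_
  rw [hden, hden', hcast, hcast,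
    Complex.dist_of_im_eq (by rw [Complex.ofReal_im, Complex.ofReal_im]), Complex.ofReal_re,
    Complex.ofReal_re, Real.dist_eq]
  have e1 : (a : ℝ) / (k * N) - a' / (k' * N) = (a * k' - a' * k) / (k * k' * N) := by
    field_simp
  have e2 : 1 / ((k' : ℝ) * N) = 1 / (k * N) + (k - k') / (k * k' * N) := by
    field_simp
    ring
  rw [e1, e2, abs_div, abs_of_pos (show (0 : ℝ) < k * k' * N by positivity)]
  gcongr

theorem exists_isCoprime_add_mul (N : ℕ) (hN : 0 < N) {a p : ℤ} (h : IsCoprime a p) :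
    ∃ t : ℤ, 0 ≤ t ∧ t ≤ N ∧ IsCoprime (a + t * p) N := by
  set s := N.primeFactors.filter fun l : ℕ => ¬ (l : ℤ) ∣ a with hs
  refine ⟨((∏ l ∈ s, l : ℕ) : ℤ), by positivity, ?_, ?_⟩
  · have hd : (∏ l ∈ s, l) ∣ N :=
      (Finset.prod_dvd_prod_of_subset _ _ _ (Finset.filter_subset _ _)).trans
        (Nat.prod_primeFactors_dvd N)
    exact_mod_cast Nat.le_of_dvd hN hd
  · rw [Int.isCoprime_iff_gcd_eq_one, Int.gcd, Int.natAbs_natCast]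
    refine Nat.Coprime.symm (Nat.coprime_of_dvd fun l hl hlN hla => ?_)
    have hla' : (l : ℤ) ∣ a + ((∏ l ∈ s, l : ℕ) : ℤ) * p := Int.natCast_dvd.mpr hla
    have hlp : Prime (l : ℤ) := Nat.prime_iff_prime_int.mp hl
    by_cases hd : (l : ℤ) ∣ a
    · rcases hlp.dvd_or_dvd ((dvd_add_right hd).mp hla') with h1 | h1
      · obtain ⟨m, hm, hlm⟩ := (hl.prime.dvd_finsetProd_iff _).mp (Int.natCast_dvd_natCast.mp h1)
        rw [hs, Finset.mem_filter] at hm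
        rw [(Nat.prime_dvd_prime_iff_eq hl (Nat.prime_of_mem_primeFactors hm.1)).mp hlm] at hd
        exact hm.2 hd
      · exact hlp.not_isUnit (h.isUnit_of_dvd' hd h1)
    · have hls : l ∈ s := Finset.mem_filter.mpr
        ⟨Nat.mem_primeFactors.mpr ⟨hl, hlN, hN.ne'⟩, hd⟩
      have : (l : ℤ) ∣ ((∏ l ∈ s, l : ℕ) : ℤ) :=
        Int.natCast_dvd_natCast.mpr (Finset.dvd_prod_of_mem _ hls)
      exact hd ((dvd_add_left (this.mul_right p)).mp hla')

theorem exists_dominating (N : ℕ) (hN : 0 < N) {a k : ℤ} (hk : 16 * ((N : ℤ) + 2) ^ 2 < k)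
    (hak : IsCoprime a k) : ∃ a' k' : ℤ, 0 < k' ∧ k' < k ∧ IsCoprime a' N ∧ IsCoprime a' k' ∧
      |a * k' - a' * k| ≤ k - k' := by
  have hN1 : (1 : ℤ) ≤ N := by exact_mod_cast hN
  have hk0 : 0 < k := lt_trans (by positivity) hk
  obtain ⟨r, hr, hrQ⟩ := Real.exists_rat_abs_sub_le_and_den_le ((a : ℝ) / k)
    (n := 4 * (N + 2)) (by positivity)
  obtain ⟨p, hp⟩ : ∃ p : ℤ, p = r.num := ⟨_, rfl⟩
  obtain ⟨q, hq⟩ : ∃ q : ℤ, q = r.den := ⟨_, rfl⟩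
  have hq0 : 0 < q := by rw [hq]; exact_mod_cast r.den_pos
  have hqQ : q ≤ 4 * (N + 2) := by rw [hq]; exact_mod_cast hrQ
  have hpq : IsCoprime p q := by
    rw [hp, hq]
    exact Int.isCoprime_iff_gcd_eq_one.mpr r.reduced
  have hδ : |a * q - p * k| * (4 * (N + 2) + 1) ≤ k := by
    have hq0' : (0 : ℝ) < q := by exact_mod_cast hq0
    have hk0' : (0 : ℝ) < k := by exact_mod_cast hk0
    have hcast : (r : ℝ) = p / q := by
      rw [hp, hq]; exact_mod_cast Rat.cast_def (K := ℝ) r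
    have hden : (r.den : ℝ) = q := by rw [hq]; norm_cast
    rw [hcast, hden] at hr
    have e1 : (a : ℝ) / k - p / q = (a * q - p * k) / (k * q) := by
      field_simp
    rw [e1, abs_div, abs_of_pos (show (0 : ℝ) < k * q by positivity),
      div_le_div_iff₀ (by positivity) (by positivity)] at hr
    have : |(a : ℝ) * q - p * k| * (4 * (N + 2) + 1) ≤ k := by
      refine le_of_mul_le_mul_right ?_ hq0'
      push_cast at hr
      linarith
    exact_mod_cast this
  rcases eq_or_lt_of_le (show 1 ≤ q from hq0) with h1 | h2
  · rw [← h1, mul_one] at hδ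
    have hNk : (N : ℤ) < k := by nlinarith
    have hj : a - p * k ≠ 0 := by
      intro h
      have hka : k ∣ a := ⟨p, by linarith⟩
      have := hak.isUnit_of_dvd' hka dvd_rfl
      rcases Int.isUnit_iff.mp this with h | h <;> nlinarith
    rcases lt_or_gt_of_ne hj with h | h
    · rw [abs_of_neg h] at hδ
      refine ⟨p * N - 1, N, by omega, hNk, ⟨-1, p, by ring⟩, ⟨-1, p, by ring⟩, ?_⟩
      rw [abs_le]
      constructor <;> nlinarith
    · rw [abs_of_pos h] at hδ
      refine ⟨p * N + 1, N, by omega, hNk, ⟨1, -p, by ring⟩, ⟨1, -p, by ring⟩, ?_⟩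
      rw [abs_le]
      constructor <;> nlinarith
  · obtain ⟨u, v, huv⟩ := hpq
    have hk₀ := Int.emod_nonneg (-u) hq0.ne'
    have hk₀' := Int.emod_lt_of_pos (-u) hq0
    have hdm := Int.emod_add_mul_ediv (-u) q
    set k₀ := (-u) % q
    set e := (-u) / q
    have hdet : (v - p * e) * q - p * k₀ = 1 := by linear_combination huv - p * hdm
    obtain ⟨t, ht0, htN, htc⟩ := exists_isCoprime_add_mul N hN
      (a := v - p * e + p) (p := p) ⟨q, -(k₀ + q), by linear_combination hdet⟩
    set a' := v - p * e + p + t * p with ha'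
    obtain ⟨k', hk'⟩ : ∃ k', k' = k₀ + q + t * q := ⟨_, rfl⟩
    have hdet' : a' * q - p * k' = 1 := by rw [ha', hk']; linear_combination hdet
    have hk'0 : 0 < k' := by rw [hk']; positivity
    have hk'q : k' ≤ q * (N + 2) := by rw [hk']; nlinarith
    have hk'4 : 4 * k' ≤ k := by nlinarith
    refine ⟨a', k', hk'0, by linarith, htc, ⟨q, -p, by linear_combination hdet'⟩, ?_⟩
    have hkey : q * (a * k' - a' * k) = k' * (a * q - p * k) - k := by
      linear_combination -k * hdet'
    have hkd : 4 * (k' * |a * q - p * k|) ≤ q * k := by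
      have hA := abs_nonneg (a * q - p * k)
      have h3 : k' * |a * q - p * k| ≤ q * (N + 2) * |a * q - p * k| :=
        mul_le_mul_of_nonneg_right hk'q hA
      have h4 : 4 * (N + 2) * |a * q - p * k| ≤ k := by nlinarith
      nlinarith
    have h5 : q * |a * k' - a' * k| ≤ k' * |a * q - p * k| + k := by
      calc q * |a * k' - a' * k| = |k' * (a * q - p * k) - k| := by
            rw [← hkey, abs_mul, abs_of_pos hq0]
        _ ≤ |k' * (a * q - p * k)| + |k| := abs_sub _ _
        _ = k' * |a * q - p * k| + k := by rw [abs_mul, abs_of_pos hk'0, abs_of_pos hk0]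
    refine le_of_mul_le_mul_left ?_ hq0
    nlinarith

theorem finite_den_le (B : ℕ) : {γ : ℚ | 0 ≤ γ ∧ γ ≤ 1 ∧ γ.den ≤ B}.Finite := by
  refine Set.Finite.of_injOn (f := fun γ : ℚ => (γ.num, γ.den))
    (t := Set.Icc (0 : ℤ) B ×ˢ Set.Iic B) ?_ ?_ ((Set.finite_Icc _ _).prod (Set.finite_Iic _))
  · rintro γ ⟨h0, h1, hB⟩
    refine ⟨⟨Rat.num_nonneg.mpr h0, ?_⟩, hB⟩
    have := Rat.num_le_denom_iff.mpr h1
    exact this.trans (by exact_mod_cast hB)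
  · intro γ _ γ' _ h
    exact Rat.ext (congrArg Prod.fst h) (congrArg Prod.snd h)

theorem SSet_finite {N : ℕ} (hN : 0 < N) : (SSet N).Finite := by
  refine (finite_den_le (16 * (N + 2) ^ 2 * N)).subset ?_
  rintro γ ⟨hγ, hcov⟩
  refine ⟨hγ.1, hγ.2.1, ?_⟩
  obtain ⟨a, k, hk, haN, hak, h0, h1, rfl⟩ := exists_frac_of_mem_cand hγ
  by_contra! hlt
  have hnd := frac_num_den hN hk haN hak
  have hN0 : (0 : ℤ) < N := by exact_mod_cast hN
  have hkK : 16 * ((N : ℤ) + 2) ^ 2 < k := by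
    have : (16 * ((N : ℤ) + 2) ^ 2) * N < k * N := by
      rw [← hnd.2]; exact_mod_cast hlt
    exact lt_of_mul_lt_mul_right this hN0.le
  obtain ⟨a', k', hk', hlt', haN', hak', hdom⟩ := exists_dominating N hN hkK hak
  obtain ⟨hd1, hd2⟩ := abs_le.mp hdom
  have h0' : 0 ≤ a' := by
    by_contra! h
    nlinarith
  have h1' : a' ≤ k' * N := by
    by_contra! h
    nlinarith
  refine hcov ((disk_frac_subset hN hk hk' haN hak haN' hak' hdom).trans ?_)
  refine Set.subset_biUnion_of_mem (u := disk)
    (⟨frac_mem_cand hN hk' haN' hak' h0' h1', fun he => ?_⟩)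
  have hnd' := (frac_num_den hN hk' haN' hak').2
  rw [Set.mem_singleton_iff.mp he, hnd.2] at hnd'
  exact hlt'.ne' (mul_right_cancel₀ hN0.ne' hnd')

theorem exists_forall_prime_dvd {N : ℕ} (hN : 0 < N) (j k : ℕ → ℕ)
    (hk : ∀ p ∈ N.primeFactors, ¬ p ∣ k p) :
    ∃ n < N, ∀ p ∈ N.primeFactors, p ∣ k p * n + j p := by
  have hr : ∀ p : ℕ, ∃ r : ℕ, p ∈ N.primeFactors → p ∣ k p * r + j p := by
    intro p
    by_cases hp : p ∈ N.primeFactors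
    · have : Fact p.Prime := ⟨Nat.prime_of_mem_primeFactors hp⟩
      have hk0 : (k p : ZMod p) ≠ 0 := fun h => hk p hp ((ZMod.natCast_eq_zero_iff _ _).mp h)
      refine ⟨(-(j p : ZMod p) / k p).val, fun _ => ?_⟩
      rw [← ZMod.natCast_eq_zero_iff]
      push_cast
      rw [ZMod.natCast_val, ZMod.cast_id, mul_div_cancel₀ _ hk0]
      ring
    · exact ⟨0, fun h => absurd h hp⟩
  choose r hr using hr
  obtain ⟨n, hn⟩ := Nat.chineseRemainderOfFinset r id N.primeFactors
    (fun p hp => (Nat.prime_of_mem_primeFactors hp).ne_zero)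
    (fun p hp q hq hpq => (Nat.coprime_primes (Nat.prime_of_mem_primeFactors hp)
      (Nat.prime_of_mem_primeFactors hq)).mpr hpq)
  refine ⟨n % N, Nat.mod_lt _ hN, fun p hp => ?_⟩
  have h1 : n % N ≡ r p [MOD p] :=
    ((Nat.mod_modEq n N).of_dvd (Nat.dvd_of_mem_primeFactors hp)).trans (hn p hp)
  exact (((h1.mul_left (k p)).add_right (j p)).dvd_iff dvd_rfl).mpr (hr p hp)

theorem isCoprime_of_forall_prime {N : ℕ} (hN : 0 < N) {x : ℕ}
    (h : ∀ p ∈ N.primeFactors, ¬ p ∣ x) : IsCoprime (x : ℤ) N := by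
  rw [Nat.isCoprime_iff_coprime]
  exact (Nat.coprime_of_dvd fun p hp hpN hpx =>
    h p (Nat.mem_primeFactors.mpr ⟨hp, hpN, hN.ne'⟩) hpx).symm

theorem not_isCoprime_of_prime_dvd {N p x : ℕ} (hp : p ∈ N.primeFactors) (h : p ∣ x) :
    ¬ IsCoprime (x : ℤ) N := by
  rw [Nat.isCoprime_iff_coprime]
  exact Nat.not_coprime_of_dvd_of_dvd (Nat.prime_of_mem_primeFactors hp).one_lt h
    (Nat.dvd_of_mem_primeFactors hp)

theorem not_dvd_of_dvd_form {p n : ℕ} (hp : p.Prime)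
    (h : (p ≠ 2 ∧ p ∣ n) ∨ (p ≠ 3 ∧ p ∣ n + 1) ∨ p ∣ 2 * n + 1 ∨ p ∣ 3 * n + 1 ∨
      (p ≠ 2 ∧ p ≠ 5 ∧ p ∣ 3 * n + 2)) : ¬ p ∣ 4 * n + 1 ∧ ¬ p ∣ 5 * n + 2 := by
  have key : ∀ {m : ℕ}, p ∣ m → m ∈ [1, 2, 3, 4, 5] →
      (m = 2 ∨ m = 4 → p ≠ 2) → (m = 3 → p ≠ 3) → (m = 5 → p ≠ 5) → False := by
    intro m hm hmem h2 h3 h5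
    have h4 : p ∣ 4 → p = 2 := fun h =>
      (Nat.prime_dvd_prime_iff_eq hp Nat.prime_two).mp (hp.dvd_of_dvd_pow (n := 2) h)
    simp only [List.mem_cons, List.not_mem_nil, or_false] at hmem
    rcases hmem with rfl | rfl | rfl | rfl | rfl
    · exact hp.one_lt.ne' (Nat.dvd_one.mp hm)
    · exact h2 (by simp) ((Nat.prime_dvd_prime_iff_eq hp Nat.prime_two).mp hm)
    · exact h3 rfl ((Nat.prime_dvd_prime_iff_eq hp Nat.prime_three).mp hm)
    · exact h2 (by simp) (h4 hm)
    · exact h5 rfl ((Nat.prime_dvd_prime_iff_eq hp Nat.prime_five).mp hm)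
  have comb : ∀ {x y : ℕ} (m c d : ℕ), p ∣ x → p ∣ y → (c * x = d * y + m ∨ d * y = c * x + m) →
      p ∣ m := by
    intro x y m c d hx hy h
    rcases h with h | h
    · exact (Nat.dvd_add_right (hy.mul_left d)).mp (h ▸ hx.mul_left c)
    · exact (Nat.dvd_add_right (hx.mul_left c)).mp (h ▸ hy.mul_left d)
  rcases h with ⟨h2, h⟩ | ⟨h3, h⟩ | h | h | ⟨h2, h5, h⟩ <;> refine ⟨fun h' => ?_, fun h' => ?_⟩
  · exact key (comb 1 4 1 h h' (by omega)) (by simp) (by simp) (by simp) (by simp)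
  · exact key (comb 2 5 1 h h' (by omega)) (by simp) (by simp [h2]) (by simp) (by simp)
  · exact key (comb 3 4 1 h h' (by omega)) (by simp) (by simp) (by simp [h3]) (by simp)
  · exact key (comb 3 5 1 h h' (by omega)) (by simp) (by simp) (by simp [h3]) (by simp)
  · exact key (comb 1 2 1 h h' (by omega)) (by simp) (by simp) (by simp) (by simp)
  · exact key (comb 1 5 2 h h' (by omega)) (by simp) (by simp) (by simp) (by simp)
  · exact key (comb 1 4 3 h h' (by omega)) (by simp) (by simp) (by simp) (by simp)
  · exact key (comb 1 5 3 h h' (by omega)) (by simp) (by simp) (by simp) (by simp)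
  · exact key (comb 5 4 3 h h' (by omega)) (by simp) (by simp) (by simp) (by simp [h5])
  · exact key (comb 4 5 3 h h' (by omega)) (by simp) (by simp [h2]) (by simp) (by simp)

theorem exists_mem_notMem {s : Finset ℕ} (l : List ℕ) (h : l.length < s.card) :
    ∃ p ∈ s, p ∉ l := by
  by_contra! hc
  have : s ⊆ l.toFinset := fun p hp => List.mem_toFinset.mpr (hc p hp)
  exact absurd ((Finset.card_le_card this).trans l.toFinset_card_le) (by omega)

theorem exists_position {N : ℕ} (hN : 0 < N)
    (h : 5 ≤ N.primeFactors.card ∨ (4 ≤ N.primeFactors.card ∧ Even N)) :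
    ∃ n : ℕ, n < N ∧ (∃ p ∈ N.primeFactors, p ∣ n) ∧ (∃ p ∈ N.primeFactors, p ∣ n + 1) ∧
      (∃ p ∈ N.primeFactors, p ∣ 2 * n + 1) ∧ (∃ p ∈ N.primeFactors, p ∣ 3 * n + 1) ∧
      (∃ p ∈ N.primeFactors, p ∣ 3 * n + 2) ∧
      ∀ p ∈ N.primeFactors, ¬ p ∣ 4 * n + 1 ∧ ¬ p ∣ 5 * n + 2 := by
  have hdvd : ∀ {p m : ℕ}, p ∈ N.primeFactors → m.Prime → p ≠ m → ¬ p ∣ m := fun hp hm hne hd =>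
    hne ((Nat.prime_dvd_prime_iff_eq (Nat.prime_of_mem_primeFactors hp) hm).mp hd)
  have hdvd1 : ∀ {p : ℕ}, p ∈ N.primeFactors → ¬ p ∣ 1 := fun hp hd =>
    (Nat.prime_of_mem_primeFactors hp).one_lt.ne' (Nat.dvd_one.mp hd)
  by_cases h2 : 2 ∈ N.primeFactors
  · have hc : 4 ≤ N.primeFactors.card := by omega
    obtain ⟨r, hr, hr'⟩ := exists_mem_notMem (s := N.primeFactors) [2, 3, 5] (by simp; omega)
    obtain ⟨q, hq, hq'⟩ := exists_mem_notMem (s := N.primeFactors) [2, r] (by simp; omega)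
    obtain ⟨p, hp, hp'⟩ := exists_mem_notMem (s := N.primeFactors) [2, q, r] (by simp; omega)
    simp only [List.mem_cons, List.not_mem_nil, or_false, not_or] at hr' hq' hp'
    let f : ℕ → ℕ × ℕ := fun l => if l = 2 then (1, 1) else if l = r then (2, 3) else
      if l = q then (1, 2) else (0, 1)
    obtain ⟨n, hn, hl⟩ := exists_forall_prime_dvd hN (fun l => (f l).1) (fun l => (f l).2) (by
      intro l hl
      simp only [f]
      split_ifs with h1 h3 h4
      · exact hdvd1 hl
      · exact hdvd hl Nat.prime_three (h3 ▸ hr'.2.1)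
      · exact hdvd hl Nat.prime_two h1
      · exact hdvd1 hl)
    have l2 := hl 2 h2
    have lr := hl r hr
    have lq := hl q hq
    have lp := hl p hp
    simp only [f, hr', hq', hp', if_true, if_false, one_mul, add_zero] at l2 lr lq lp
    refine ⟨n, hn, ⟨p, hp, lp⟩, ⟨2, h2, l2⟩, ⟨q, hq, lq⟩, ⟨2, h2, by omega⟩, ⟨r, hr, lr⟩, ?_⟩
    intro l hlN
    have := hl l hlN
    refine not_dvd_of_dvd_form (Nat.prime_of_mem_primeFactors hlN) ?_
    simp only [f] at this
    split_ifs at this with h1 h3 h4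
    · simp_all
    · subst h3
      simp_all
    · simp_all
    · simp_all
  · have hc : 5 ≤ N.primeFactors.card := by
      rcases h with h | ⟨-, h⟩
      · exact h
      · exact absurd (Nat.mem_primeFactors.mpr ⟨Nat.prime_two, h.two_dvd, hN.ne'⟩) h2
    obtain ⟨v, hv, hv'⟩ := exists_mem_notMem (s := N.primeFactors) [3, 5] (by simp; omega)
    obtain ⟨u, hu, hu'⟩ := exists_mem_notMem (s := N.primeFactors) [3, v] (by simp; omega)
    obtain ⟨r, hr, hr'⟩ := exists_mem_notMem (s := N.primeFactors) [3, u, v] (by simp; omega)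
    obtain ⟨q, hq, hq'⟩ := exists_mem_notMem (s := N.primeFactors) [r, u, v] (by simp; omega)
    obtain ⟨p, hp, hp'⟩ := exists_mem_notMem (s := N.primeFactors) [q, r, u, v] (by simp; omega)
    simp only [List.mem_cons, List.not_mem_nil, or_false, not_or] at hv' hu' hr' hq' hp'
    let f : ℕ → ℕ × ℕ := fun l => if l = v then (2, 3) else if l = u then (1, 3) else
      if l = r then (1, 1) else if l = q then (1, 2) else (0, 1)
    obtain ⟨n, hn, hl⟩ := exists_forall_prime_dvd hN (fun l => (f l).1) (fun l => (f l).2) (by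
      intro l hl
      have hl2 : l ≠ 2 := fun h => h2 (h ▸ hl)
      simp only [f]
      split_ifs with h1 h3 h4 h5
      · exact hdvd hl Nat.prime_three (h1 ▸ hv'.1)
      · exact hdvd hl Nat.prime_three (h3 ▸ hu'.1)
      · exact hdvd1 hl
      · exact hdvd hl Nat.prime_two hl2
      · exact hdvd1 hl)
    have lv := hl v hv
    have lu := hl u hu
    have lr := hl r hr
    have lq := hl q hq
    have lp := hl p hp
    simp only [f, hu', hr', hq', hp', if_true, if_false, one_mul, add_zero] at lv lu lr lq lp
    refine ⟨n, hn, ⟨p, hp, lp⟩, ⟨r, hr, lr⟩, ⟨q, hq, lq⟩, ⟨u, hu, lu⟩, ⟨v, hv, lv⟩, ?_⟩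
    intro l hlN
    have := hl l hlN
    have hl2 : l ≠ 2 := fun h => h2 (h ▸ hlN)
    refine not_dvd_of_dvd_form (Nat.prime_of_mem_primeFactors hlN) ?_
    simp only [f] at this
    split_ifs at this with h1 h3 h4 h5 <;> simp_all

theorem northPole_frac {N : ℕ} (hN : 0 < N) {a k : ℤ} (hk : 0 < k) (haN : IsCoprime a N)
    (hak : IsCoprime a k) :
    northPole (frac N a k) = ⟨(a : ℤ) / (k * N), ((1 : ℤ) : ℝ) / (k * N)⟩ := by
  have hden : ((frac N a k).den : ℂ) = ((k * N : ℝ) : ℂ) := by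
    exact_mod_cast congrArg (Int.cast (R := ℂ)) (frac_num_den hN hk haN hak).2
  have hcast : ((frac N a k : ℚ) : ℂ) = ((a / (k * N) : ℝ) : ℂ) := by
    simp [frac]
  rw [northPole, hden, hcast]
  apply Complex.ext
  · rw [Complex.add_re, Complex.div_ofReal_re, Complex.ofReal_re]; simp
  · rw [Complex.add_im, Complex.div_ofReal_im, Complex.ofReal_im]; simp

theorem one_le_cN_of_mem {N : ℕ} (hN : 0 < N) {α β : ℚ} (hα : α ∈ SSet N) (hβ : β ∈ SSet N)
    (hne : β ≠ α) (hmem : northPole α ∈ disk β) : 1 ≤ cN N := by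
  have hfin := SSet_finite hN
  have h1 : 1 ≤ poleComplexity (SSet N) α :=
    (Set.ncard_pos (hfin.subset fun _ h => h.1)).mpr ⟨β, hβ, hne, hmem⟩
  exact h1.trans (le_csSup (hfin.image _).bddAbove ⟨α, hα, rfl⟩)

/-- `c(N) ≥ 1` if `N` has at least five distinct prime factors, or if `N` is even
with at least four distinct prime factors. -/
theorem one_le_cN (N : ℕ) (hN : 1 < N)
    (h : 5 ≤ N.primeFactors.card ∨ (4 ≤ N.primeFactors.card ∧ Even N)) :
    1 ≤ cN N := by
  have hN0 : 0 < N := by omega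
  obtain ⟨n, hn, ⟨p₁, hp₁, h₁⟩, ⟨p₂, hp₂, h₂⟩, ⟨p₃, hp₃, h₃⟩, ⟨p₄, hp₄, h₄⟩, ⟨p₅, hp₅, h₅⟩, hco⟩ :=
    exists_position hN0 h
  have k₁ := not_isCoprime_of_prime_dvd hp₁ h₁
  have k₂ := not_isCoprime_of_prime_dvd hp₂ h₂
  have k₃ := not_isCoprime_of_prime_dvd hp₃ h₃
  have k₄ := not_isCoprime_of_prime_dvd hp₄ h₄
  have k₅ := not_isCoprime_of_prime_dvd hp₅ h₅
  have c₁ := isCoprime_of_forall_prime hN0 fun p hp => (hco p hp).1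
  have c₂ := isCoprime_of_forall_prime hN0 fun p hp => (hco p hp).2
  push_cast at k₁ k₂ k₃ k₄ k₅ c₁ c₂
  have d₁ : IsCoprime (4 * (n : ℤ) + 1) 4 := ⟨1, -n, by ring⟩
  have d₂ : IsCoprime (5 * (n : ℤ) + 2) 5 := ⟨-2, 2 * n + 1, by ring⟩
  have hnN : (n : ℤ) + 1 ≤ N := by exact_mod_cast hn
  have hodd : ∀ {a k : ℤ}, 2 ∣ a → 2 ∣ k → ¬ IsCoprime a k := fun ha hk hc => by
    have := hc.isUnit_of_dvd' ha hk
    exact absurd (Int.isUnit_iff.mp this) (by norm_num)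
  have hβ : frac N (4 * n + 1) 4 ∈ SSet N := by
    refine frac_mem_SSet hN0 (by norm_num) c₁ d₁ (by positivity) (by linarith)
      (4 * n + 1) 1 4 (by norm_num) (by ring_nf; norm_num) ?_
    intro a k hk haN hak hle
    have hk4 : k ≤ 4 := by nlinarith [sq_nonneg ((4 * (n : ℤ) + 1) * k - 4 * a)]
    obtain ⟨D, hD⟩ : ∃ D, D = (4 * (n : ℤ) + 1) * k - 4 * a := ⟨_, rfl⟩
    rw [← hD] at hle
    interval_cases k
    · have : -3 ≤ D ∧ D ≤ 3 := ⟨by nlinarith, by nlinarith⟩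
      rcases (by omega : a = n ∨ a = n + 1) with rfl | rfl
      exacts [absurd haN k₁, absurd haN k₂]
    · have : -3 ≤ D ∧ D ≤ 3 := ⟨by nlinarith, by nlinarith⟩
      rcases (by omega : a = 2 * n ∨ a = 2 * n + 1) with rfl | rfl
      exacts [absurd hak (hodd ⟨n, rfl⟩ dvd_rfl), absurd haN k₃]
    · have : -2 ≤ D ∧ D ≤ 2 := ⟨by nlinarith, by nlinarith⟩
      obtain rfl : a = 3 * n + 1 := by omega
      exact absurd haN k₄
    · have : 0 ≤ D ∧ D ≤ 0 := ⟨by nlinarith, by nlinarith⟩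
      exact ⟨by omega, rfl⟩
  have hα : frac N (5 * n + 2) 5 ∈ SSet N := by
    refine frac_mem_SSet hN0 (by norm_num) c₂ d₂ (by positivity) (by linarith)
      (40 * n + 18) 7 40 (by norm_num) (by ring_nf; norm_num) ?_
    intro a k hk haN hak hle
    have hk5 : k ≤ 5 := by nlinarith [sq_nonneg ((40 * (n : ℤ) + 18) * k - 40 * a)]
    obtain ⟨D, hD⟩ : ∃ D, D = (40 * (n : ℤ) + 18) * k - 40 * a := ⟨_, rfl⟩
    rw [← hD] at hle
    interval_cases k
    · have : -39 ≤ D ∧ D ≤ 39 := ⟨by nlinarith, by nlinarith⟩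
      rcases (by omega : a = n ∨ a = n + 1) with rfl | rfl
      exacts [absurd haN k₁, absurd haN k₂]
    · have : -37 ≤ D ∧ D ≤ 37 := ⟨by nlinarith, by nlinarith⟩
      rcases (by omega : a = 2 * n ∨ a = 2 * n + 1) with rfl | rfl
      exacts [absurd hak (hodd ⟨n, rfl⟩ dvd_rfl), absurd haN k₃]
    · have : -34 ≤ D ∧ D ≤ 34 := ⟨by nlinarith, by nlinarith⟩
      rcases (by omega : a = 3 * n + 1 ∨ a = 3 * n + 2) with rfl | rfl
      exacts [absurd haN k₄, absurd haN k₅]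
    · have : -28 ≤ D ∧ D ≤ 28 := ⟨by nlinarith, by nlinarith⟩
      obtain rfl : a = 4 * n + 2 := by omega
      exact absurd hak (hodd ⟨2 * n + 1, by ring⟩ ⟨2, rfl⟩)
    · have : -19 ≤ D ∧ D ≤ 19 := ⟨by nlinarith, by nlinarith⟩
      exact ⟨by omega, rfl⟩
  refine one_le_cN_of_mem hN0 hα hβ (fun he => ?_) ?_
  · have e1 := (frac_num_den hN0 (by norm_num) c₁ d₁).2
    rw [he, (frac_num_den hN0 (by norm_num) c₂ d₂).2] at e1
    omega
  · rw [northPole_frac hN0 (by norm_num) c₂ d₂]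
    refine (mem_disk_frac hN0 (by norm_num) c₁ d₁ (by norm_num)).mpr ?_
    ring_nf
    norm_num

end

end Paper
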